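/- Let r ≥ 1 and t ≥ 1 be integers. If a finite bipartite graph G = (V_L, V_R, E) contains an (r,t)-undecodable configuration as an ordered bipartite subgraph, then G is not (r,t)-decodable; that is, after r alternating decoding rounds (the last of which is a row round), at least one edge of G remains. -/

import Mathlib

/-!
Let `m` be the number of rounds still to be performed. If the last performed round was a row round,
every edge of the configuration whose *left* endpoint lies within walk distance `m` of the root is
still present; after a column round, the same holds for *right* endpoints. Indeed, a vertex `u`
within distance `m < r` has degree at least `t + 1` in the configuration, and all its neighbours
lie on the other side within distance `m + 1`, so all edges at `u` were present after the previous
round (which was of the other kind) and `u` keeps degree at least `t + 1`. This is `survives`; no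
parity bookkeeping for walks is needed. At `m = 0` all edges at the root are left, and the root has
degree at least `t + 1 > 0`.
-/

open Finset MeasureTheory Filter
open scoped ENNReal

variable {L R : Type*}

/-- Degree of a left vertex `i`: the number of `j` with `(i,j) ∈ E`. -/
noncomputable def degL (E : Finset (L × R)) (i : L) : ℕ := Set.ncard {j : R | (i, j) ∈ E}

/-- Degree of a right vertex `j`: the number of `i` with `(i,j) ∈ E`. -/
noncomputable def degR (E : Finset (L × R)) (j : R) : ℕ := Set.ncard {i : L | (i, j) ∈ E}

/-- Degree of a vertex of the bipartite graph. -/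
noncomputable def deg (E : Finset (L × R)) : L ⊕ R → ℕ
  | Sum.inl i => degL E i
  | Sum.inr j => degR E j

/-- Adjacency relation of the bipartite graph with edge set `E`. -/
def badj (E : Finset (L × R)) : L ⊕ R → L ⊕ R → Prop
  | Sum.inl i, Sum.inr j => (i, j) ∈ E
  | Sum.inr j, Sum.inl i => (i, j) ∈ E
  | _, _ => False

/-- `reach E v k` is `N_k(v)`: the set of vertices reachable from `v` by a walk
(edges may repeat) of length exactly `k`. -/
def reach (E : Finset (L × R)) (v : L ⊕ R) : ℕ → Set (L ⊕ R)
  | 0 => {v}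
  | k + 1 => {u | ∃ w ∈ reach E v k, badj E w u}

/-- `H = (V'_L, V'_R, E)` with root `v ∈ V'_L` is an `(r,t)`-undecodable configuration:
`⋃_{i=0}^{r} N_i(v)` is the whole vertex set, and every vertex in `⋃_{i=0}^{r-1} N_i(v)`
has degree at least `t+1`. -/
def IsUndecodableConfig (r t : ℕ) (E : Finset (L × R)) (v : L) : Prop :=
  (∀ u : L ⊕ R, ∃ i ≤ r, u ∈ reach E (Sum.inl v) i) ∧
  (∀ u : L ⊕ R, (∃ i < r, u ∈ reach E (Sum.inl v) i) → t + 1 ≤ deg E u)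

/-- `E'` (on parts `L'`, `R'`) is an ordered bipartite subgraph of `E` (on parts `L`, `R`). -/
def IsOrderedSubgraph {L' R' : Type*} (E' : Finset (L' × R')) (E : Finset (L × R)) : Prop :=
  ∃ (fL : L' ↪ L) (fR : R' ↪ R), ∀ q ∈ E', (fL q.1, fR q.2) ∈ E

/-- Row-decoding step: keep only the edges whose left endpoint has degree at least `t+1`. -/
noncomputable def rho (t : ℕ) (E : Finset (L × R)) : Finset (L × R) :=
  E.filter (fun x => t + 1 ≤ degL E x.1)

/-- Column-decoding step: keep only the edges whose right endpoint has degree at least `t+1`. -/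
noncomputable def kappa (t : ℕ) (E : Finset (L × R)) : Finset (L × R) :=
  E.filter (fun x => t + 1 ≤ degR E x.2)

/-- `iterDecode t b k E` applies `k` alternating decoding steps to `E`; the outermost
(last-performed) step is `rho` if `b = true` and `kappa` if `b = false`. -/
noncomputable def iterDecode (t : ℕ) : Bool → ℕ → Finset (L × R) → Finset (L × R)
  | _, 0, E => E
  | b, k + 1, E => (if b then rho t else kappa t) (iterDecode t (!b) k E)

/-- `E` is `(r,t)`-decodable: `r` alternating decoding rounds, the last of which is a
row round, remove all edges. -/
def Decodable (r t : ℕ) (E : Finset (L × R)) : Prop := iterDecode t true r E = ∅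

/-- The vertices reachable from `v` by a walk of length at most `m`. -/
def reachLE {L R : Type*} (E : Finset (L × R)) (v : L ⊕ R) (m : ℕ) : Set (L ⊕ R) :=
  {u | ∃ n ≤ m, u ∈ reach E v n}

theorem reachLE_step {L R : Type*} {E : Finset (L × R)} {v u w : L ⊕ R} {m : ℕ}
    (hu : u ∈ reachLE E v m) (h : badj E u w) : w ∈ reachLE E v (m + 1) := by
  obtain ⟨n, hn, hu⟩ := hu
  exact ⟨n + 1, by omega, u, hu, h⟩

theorem degL_le_of_embedding {L R L' R' : Type*} [Finite R] {F : Finset (L × R)}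
    {E' : Finset (L' × R')} (fL : L' ↪ L) (fR : R' ↪ R) (i : L')
    (h : ∀ j, (i, j) ∈ E' → (fL i, fR j) ∈ F) : degL E' i ≤ degL F (fL i) :=
  Set.ncard_le_ncard_of_injOn fR (fun j hj => h j hj) fR.injective.injOn (Set.toFinite _)

theorem degR_le_of_embedding {L R L' R' : Type*} [Finite L] {F : Finset (L × R)}
    {E' : Finset (L' × R')} (fL : L' ↪ L) (fR : R' ↪ R) (j : R')
    (h : ∀ i, (i, j) ∈ E' → (fL i, fR j) ∈ F) : degR E' j ≤ degR F (fR j) :=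
  Set.ncard_le_ncard_of_injOn fL (fun i hi => h i hi) fL.injective.injOn (Set.toFinite _)

/-- With `m` rounds left, an edge of the configuration survives the first `k` rounds if its
endpoint on the side last decoded (left for `b = true`, right for `b = false`) is within walk
distance `m` of the root. -/
theorem survives {L R L' R' : Type*} [Finite L] [Finite R] {r t : ℕ}
    {E : Finset (L × R)} {E' : Finset (L' × R')} {v : L' ⊕ R'}
    (hdeg : ∀ u, (∃ i < r, u ∈ reach E' v i) → t + 1 ≤ deg E' u)
    (fL : L' ↪ L) (fR : R' ↪ R) (hf : ∀ q ∈ E', (fL q.1, fR q.2) ∈ E) (k : ℕ) :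
    ∀ (b : Bool) (m : ℕ), m + k ≤ r → ∀ i j, (i, j) ∈ E' →
      (if b then Sum.inl i else Sum.inr j) ∈ reachLE E' v m →
      (fL i, fR j) ∈ iterDecode t b k E := by
  induction k with
  | zero => exact fun _ _ _ i j hij _ => hf (i, j) hij
  | succ k ih =>
    have deg_of_mem : ∀ m, m + (k + 1) ≤ r → ∀ u ∈ reachLE E' v m, t + 1 ≤ deg E' u := by
      rintro m hm u ⟨n, hn, hu⟩
      exact hdeg u ⟨n, by omega, hu⟩
    rintro (_ | _) m hm i j hij hmem
    · replace hmem : Sum.inr j ∈ reachLE E' v m := by simpa using hmem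
      have key : ∀ i', (i', j) ∈ E' → (fL i', fR j) ∈ iterDecode t true k E := fun i' h =>
        ih true (m + 1) (by omega) i' j h
          (by simpa using reachLE_step (w := Sum.inl i') hmem h)
      exact Finset.mem_filter.2 ⟨key i hij,
        (deg_of_mem m hm _ hmem).trans (degR_le_of_embedding fL fR j key)⟩
    · replace hmem : Sum.inl i ∈ reachLE E' v m := by simpa using hmem
      have key : ∀ j', (i, j') ∈ E' → (fL i, fR j') ∈ iterDecode t false k E := fun j' h =>
        ih false (m + 1) (by omega) i j' h
          (by simpa using reachLE_step (w := Sum.inr j') hmem h)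
      exact Finset.mem_filter.2 ⟨key j hij,
        (deg_of_mem m hm _ hmem).trans (degL_le_of_embedding fL fR i key)⟩

theorem undecodable_config_implies_not_decodable
    {L R L' R' : Type*} [Fintype L] [Fintype R] [Fintype L'] [Fintype R']
    (r t : ℕ) (hr : 1 ≤ r) (ht : 1 ≤ t)
    (E : Finset (L × R)) (E' : Finset (L' × R')) (v : L')
    (hconf : IsUndecodableConfig r t E' v)
    (hsub : IsOrderedSubgraph E' E) :
    ¬ Decodable r t E := by
  obtain ⟨fL, fR, hf⟩ := hsub
  have hv : t + 1 ≤ degL E' v := hconf.2 (Sum.inl v) ⟨0, hr, rfl⟩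
  obtain ⟨j, hj⟩ : {j : R' | (v, j) ∈ E'}.Nonempty :=
    Set.nonempty_of_ncard_ne_zero (by unfold degL at hv; omega)
  have hmem := survives hconf.2 fL fR hf r true 0 (by omega) v j hj ⟨0, le_rfl, rfl⟩
  intro hdec
  exact Finset.notMem_empty _ (hdec ▸ hmem)
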